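/- Assume a11 < 1 and let θ > 0. Then the matrix M̃(θ) is convergent to zero if and only if h̃(θ) < 0. -/

import Mathlib

open Filter

/-- A square matrix with nonnegative real entries is *convergent to zero* if its powers
tend to the zero matrix. -/
def ConvergentToZero {n : ℕ} (M : Matrix (Fin n) (Fin n) ℝ) : Prop :=
  Tendsto (fun k : ℕ => M ^ k) atTop (nhds 0)

/-- The matrix `M̃(θ)` for `θ > 0`: rows `(a11, a12 (e^{θT}-1)/θ)` and `(a21, a22/θ)`. -/
noncomputable def Mtilde (T a11 a12 a21 a22 θ : ℝ) : Matrix (Fin 2) (Fin 2) ℝ :=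
  !![a11, a12 * ((Real.exp (θ * T) - 1) / θ);
     a21, a22 / θ]

/-- The function `h̃(θ) = a11 + a22/θ - 1 - a11 a22/θ + a12 a21 (e^{θT}-1)/θ` (for `θ > 0`). -/
noncomputable def htilde (T a11 a12 a21 a22 θ : ℝ) : ℝ :=
  a11 + a22 / θ - 1 - a11 * a22 / θ + a12 * a21 * ((Real.exp (θ * T) - 1) / θ)

namespace Matrix

variable {n : ℕ} {M : Matrix (Fin n) (Fin n) ℝ}

lemma mulVec_mono_of_nonneg (hM : ∀ i j, 0 ≤ M i j) {v w : Fin n → ℝ} (hvw : v ≤ w) :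
    M *ᵥ v ≤ M *ᵥ w := fun i => by
  simp only [mulVec, dotProduct]
  exact Finset.sum_le_sum fun j _ => mul_le_mul_of_nonneg_left (hvw j) (hM i j)

lemma pow_apply_nonneg_of_nonneg (hM : ∀ i j, 0 ≤ M i j) (k : ℕ) (i j : Fin n) :
    0 ≤ (M ^ k) i j := by
  induction k generalizing i j with
  | zero => rw [pow_zero, one_apply]; split_ifs <;> norm_num
  | succ k ih =>
    rw [pow_succ, mul_apply]
    exact Finset.sum_nonneg fun l _ => mul_nonneg (ih i l) (hM l j)

lemma pow_mulVec_le_of_mulVec_le (hM : ∀ i j, 0 ≤ M i j) {v : Fin n → ℝ} {r : ℝ}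
    (hr : 0 ≤ r) (h : M *ᵥ v ≤ r • v) (k : ℕ) : (M ^ k) *ᵥ v ≤ r ^ k • v := by
  induction k with
  | zero => simp
  | succ k ih =>
    calc (M ^ (k + 1)) *ᵥ v = M *ᵥ ((M ^ k) *ᵥ v) := by rw [pow_succ', mulVec_mulVec]
      _ ≤ M *ᵥ (r ^ k • v) := mulVec_mono_of_nonneg hM ih
      _ = r ^ k • (M *ᵥ v) := mulVec_smul _ _ _
      _ ≤ r ^ k • (r • v) := smul_le_smul_of_nonneg_left h (pow_nonneg hr k)
      _ = r ^ (k + 1) • v := by rw [smul_smul, pow_succ]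

lemma le_pow_mulVec_of_le_mulVec (hM : ∀ i j, 0 ≤ M i j) {u : Fin n → ℝ}
    (h : u ≤ M *ᵥ u) (k : ℕ) : u ≤ (M ^ k) *ᵥ u := by
  induction k with
  | zero => simp
  | succ k ih =>
    rw [pow_succ', ← mulVec_mulVec]
    exact h.trans (mulVec_mono_of_nonneg hM ih)

end Matrix

open Matrix

/-- A nonnegative matrix that strictly contracts a positive vector is convergent to zero. -/
lemma ConvergentToZero.of_mulVec_le_smul {n : ℕ} {M : Matrix (Fin n) (Fin n) ℝ}
    (hM : ∀ i j, 0 ≤ M i j) {v : Fin n → ℝ} (hv : ∀ i, 0 < v i) {r : ℝ} (hr : 0 ≤ r)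
    (hr1 : r < 1) (h : M *ᵥ v ≤ r • v) : ConvergentToZero M := by
  refine tendsto_pi_nhds.2 fun i => tendsto_pi_nhds.2 fun j => ?_
  have hlim : Tendsto (fun k : ℕ => r ^ k * (v i / v j)) atTop (nhds 0) := by
    simpa using (tendsto_pow_atTop_nhds_zero_of_lt_one hr hr1).mul_const (v i / v j)
  refine squeeze_zero (fun k => pow_apply_nonneg_of_nonneg hM k i j) (fun k => ?_) hlim
  rw [← mul_div_assoc, le_div_iff₀ (hv j)]
  calc (M ^ k) i j * v j ≤ ((M ^ k) *ᵥ v) i :=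
        Finset.single_le_sum (f := fun l => (M ^ k) i l * v l)
          (fun l _ => mul_nonneg (pow_apply_nonneg_of_nonneg hM k i l) (hv l).le)
          (Finset.mem_univ j)
    _ ≤ r ^ k * v i := pow_mulVec_le_of_mulVec_le hM hr h k i

/-- A nonnegative matrix convergent to zero has no subinvariant vector with a positive entry. -/
lemma ConvergentToZero.nonpos_of_le_mulVec {n : ℕ} {M : Matrix (Fin n) (Fin n) ℝ}
    (hM : ∀ i j, 0 ≤ M i j) (hconv : ConvergentToZero M) {u : Fin n → ℝ}
    (h : u ≤ M *ᵥ u) : u ≤ 0 := by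
  have hcont : Continuous fun A : Matrix (Fin n) (Fin n) ℝ => A *ᵥ u :=
    continuous_id.matrix_mulVec continuous_const
  have hlim : Tendsto (fun k : ℕ => (M ^ k) *ᵥ u) atTop (nhds 0) := by
    simpa [Function.comp_def] using (hcont.tendsto 0).comp hconv
  exact ge_of_tendsto' hlim (le_pow_mulVec_of_le_mulVec hM h)

lemma convergentToZero_fin_two_iff {a b c d : ℝ} (ha : 0 ≤ a) (hb : 0 ≤ b) (hc : 0 ≤ c)
    (hd : 0 ≤ d) (ha1 : a < 1) :
    ConvergentToZero !![a, b; c, d] ↔ b * c < (1 - a) * (1 - d) := by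
  have hM : ∀ i j, 0 ≤ !![a, b; c, d] i j := by
    simp [Fin.forall_fin_two, ha, hb, hc, hd]
  constructor
  · intro hconv
    by_contra! hle
    have hsub : ![b, 1 - a] ≤ !![a, b; c, d] *ᵥ ![b, 1 - a] := by
      rw [Pi.le_def, Fin.forall_fin_two]
      constructor
      · simp [mulVec, dotProduct, Fin.sum_univ_two]; linarith
      · simp [mulVec, dotProduct, Fin.sum_univ_two]; linarith
    have := hconv.nonpos_of_le_mulVec hM hsub 1
    simp at this
    linarith
  · intro hlt
    have hd1 : d < 1 := by
      by_contra! hd1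
      nlinarith [mul_nonneg hb hc, mul_nonneg (sub_nonneg.2 ha1.le) (sub_nonneg.2 hd1)]
    -- `(1 - M) v = det (1 - M) • 1` for the positive vector `v = (x, y)`.
    set x := 1 - d + b with hx
    set y := 1 - a + c with hy
    have hx0 : 0 < x := by linarith
    have hy0 : 0 < y := by linarith
    have h₁ : a * x + b * y < x := by rw [hx, hy]; linarith
    have h₂ : c * x + d * y < y := by rw [hx, hy]; linarith
    refine ConvergentToZero.of_mulVec_le_smul hM (v := ![x, y])
      (r := max ((a * x + b * y) / x) ((c * x + d * y) / y)) ?_ ?_ ?_ ?_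
    · simp [Fin.forall_fin_two, hx0, hy0]
    · exact le_max_of_le_left (by positivity)
    · exact max_lt ((div_lt_one hx0).2 h₁) ((div_lt_one hy0).2 h₂)
    · rw [Pi.le_def, Fin.forall_fin_two]
      constructor
      · simpa [mulVec, dotProduct, Fin.sum_univ_two] using
          (div_le_iff₀ hx0).1 (le_max_left ((a * x + b * y) / x) ((c * x + d * y) / y))
      · simpa [mulVec, dotProduct, Fin.sum_univ_two] using
          (div_le_iff₀ hy0).1 (le_max_right ((a * x + b * y) / x) ((c * x + d * y) / y))

/-- If `a11 < 1` and `θ > 0`, then `M̃(θ)` is convergent to zero if and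
only if `h̃(θ) < 0`. -/
theorem mtilde_convergentToZero_iff_htilde_neg (T a11 a12 a21 a22 θ : ℝ)
    (hT : 0 < T) (h11 : 0 ≤ a11) (h12 : 0 ≤ a12) (h21 : 0 ≤ a21) (h22 : 0 ≤ a22)
    (h11lt : a11 < 1) (hθ : 0 < θ) :
    ConvergentToZero (Mtilde T a11 a12 a21 a22 θ) ↔ htilde T a11 a12 a21 a22 θ < 0 := by
  have hexp : 0 ≤ (Real.exp (θ * T) - 1) / θ :=
    div_nonneg (sub_nonneg.2 (Real.one_le_exp (by positivity))) hθ.le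
  rw [Mtilde, convergentToZero_fin_two_iff h11 (mul_nonneg h12 hexp) h21
    (div_nonneg h22 hθ.le) h11lt, htilde, mul_div_assoc a11, ← sub_neg]
  ring_nf
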